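/- Let R be an infinite field and let F be a barycentrically associative *-ary polynomial function on R. Suppose F_n = M_n^z for some integer n ≥ 2 and some z ∈ R with Δ_n^z ≠ 0. Then either F_{n+1} = M_{n+1}^z (in particular Δ_{n+1}^z ≠ 0) or F_{n+1} is a constant function. Moreover, if Δ_{n+1}^z = 0, then F_{n+1} is a constant function. -/

import Mathlib

/-- Barycentric associativity of a `*`-ary function. -/
def BAssoc {X : Type*} (F : ∀ n : ℕ, (Fin n → X) → X) : Prop :=
  ∀ (a b k : ℕ), 1 ≤ k → ∀ (x : Fin a → X) (y : Fin k → X) (z : Fin b → X),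
    F (a + k + b) (Fin.append (Fin.append x y) z) =
      F (a + k + b) (Fin.append (Fin.append x (fun _ : Fin k => F k y)) z)

/-- `Δ_n^z = Σ_{i=1}^n z^{n-i} (1-z)^{i-1}` (here reindexed from `0` to `n-1`). -/
def Delta {R : Type*} [CommRing R] (n : ℕ) (z : R) : R :=
  ∑ i ∈ Finset.range n, z ^ (n - 1 - i) * (1 - z) ^ i

/-- The weighted arithmetic mean `M_n^z` over a field (defined when `Δ_n^z ≠ 0`). -/
noncomputable def Mz {R : Type*} [Field R] (n : ℕ) (z : R) (x : Fin n → R) : R :=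
  (Delta n z)⁻¹ * ∑ i : Fin n, z ^ (n - 1 - (i : ℕ)) * (1 - z) ^ (i : ℕ) * x i

theorem BAssoc.gen {X : Type*} {F : ∀ n : ℕ, (Fin n → X) → X} (hB : BAssoc F)
    (a k b N : ℕ) (hN : a + k + b = N) (hk : 1 ≤ k) (v w : Fin N → X)
    (hout : ∀ i : Fin N, (i.val < a ∨ a + k ≤ i.val) → v i = w i)
    (hin : F k (fun i => v ⟨a + i.val, by omega⟩) = F k (fun i => w ⟨a + i.val, by omega⟩)) :
    F N v = F N w := by
  subst hN
  have key : ∀ v : Fin (a + k + b) → X, v = Fin.append (Fin.append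
      (fun i : Fin a => v ⟨i.val, by omega⟩) (fun i : Fin k => v ⟨a + i.val, by omega⟩))
      (fun i : Fin b => v ⟨a + k + i.val, by omega⟩) := by
    intro v
    funext i
    refine Fin.addCases (fun i => ?_) (fun i => ?_) i
    · rw [Fin.append_left]
      refine Fin.addCases (fun i => ?_) (fun i => ?_) i
      · rw [Fin.append_left]; rfl
      · rw [Fin.append_right]; rfl
    · rw [Fin.append_right]; rfl
  rw [key v, key w, hB a b k hk, hin, hB a b k hk (fun i : Fin a => w ⟨i.val, by omega⟩)]
  have h1 : (fun i : Fin a => v ⟨i.val, by omega⟩) = (fun i : Fin a => w ⟨i.val, by omega⟩) := by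
    funext i; exact hout _ (Or.inl i.2)
  have h2 : (fun i : Fin b => v ⟨a + k + i.val, by omega⟩)
      = (fun i : Fin b => w ⟨a + k + i.val, by omega⟩) := by
    funext i; exact hout _ (Or.inr (by simp))
  rw [h1, h2]

/-- the unnormalised weighted sum -/
def wS {R : Type*} [Field R] (n : ℕ) (z : R) (x : Fin n → R) : R :=
  ∑ i : Fin n, z ^ (n - 1 - (i : ℕ)) * (1 - z) ^ (i : ℕ) * x i

theorem wS_const {R : Type*} [Field R] (n : ℕ) (z t : R) :
    wS n z (fun _ => t) = Delta n z * t := by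
  simp [wS, Delta, Finset.sum_range, Finset.sum_mul]

theorem wS_init {R : Type*} [Field R] (n : ℕ) (z : R) (x : Fin (n + 1) → R) :
    wS (n + 1) z x = z * wS n z (fun i => x i.castSucc) + (1 - z) ^ n * x (Fin.last n) := by
  simp only [wS, Fin.sum_univ_castSucc, Finset.mul_sum]
  congr 1
  · refine Finset.sum_congr rfl fun i _ => ?_
    have : n + 1 - 1 - (i.castSucc : ℕ) = (n - 1 - i.val) + 1 := by
      have := i.2
      simp; omega
    rw [this, pow_succ]; simp; ring
  · simp

theorem wS_tail {R : Type*} [Field R] (n : ℕ) (z : R) (x : Fin (n + 1) → R) :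
    wS (n + 1) z x = z ^ n * x 0 + (1 - z) * wS n z (fun i => x i.succ) := by
  simp only [wS, Fin.sum_univ_succ, Finset.mul_sum]
  congr 1
  · simp
  · refine Finset.sum_congr rfl fun i _ => ?_
    have : n + 1 - 1 - (i.succ : ℕ) = (n - 1 - i.val) := by
      have := i.2
      simp; omega
    rw [this]; simp; ring

theorem wS_zero {R : Type*} [Field R] (n : ℕ) (z : R) (x : Fin n → R) (h : ∀ i, x i = 0) :
    wS n z x = 0 := by simp [wS, h]

theorem wS_one {R : Type*} [Field R] (n : ℕ) (x : Fin (n + 1) → R) :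
    wS (n + 1) 1 x = x 0 := by
  rw [wS_tail]; simp

theorem factor_h {R : Type*} [Field R] (m : ℕ) (z : R) (G : (Fin (m + 3) → R) → R)
    (hi : ∀ x y : Fin (m + 3) → R, wS (m + 2) z (fun i => x i.castSucc)
      = wS (m + 2) z (fun i => y i.castSucc) → x (Fin.last _) = y (Fin.last _) → G x = G y)
    (ht : ∀ x y : Fin (m + 3) → R, wS (m + 2) z (fun i => x i.succ)
      = wS (m + 2) z (fun i => y i.succ) → x 0 = y 0 → G x = G y) :
    ∃ h : R → R, ∀ x, G x = h (wS (m + 3) z x) := by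
  by_cases hz : z = 1
  · subst hz
    refine ⟨fun s => G (fun i => if i.val = 0 then s else 0), fun x => ?_⟩
    have e1 := ht x (fun i => if i.val = 0 then x 0 else if i.val = 1 then x 1 else 0)
      (by rw [wS_one, wS_one]; simp) (by simp)
    rw [e1]
    refine hi _ _ ?_ ?_
    · simp [wS_one]
    · simp
  · have h1 : 1 - z ≠ 0 := sub_ne_zero.mpr (Ne.symm hz)
    refine ⟨fun s => G (fun i => if i.val = m + 2 then s / (1 - z) ^ (m + 2) else 0),
      fun x => ?_⟩
    have e1 := hi x (fun i => if i.val = m + 1 then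
        wS (m + 2) z (fun i => x i.castSucc) / (1 - z) ^ (m + 1)
        else if i.val = m + 2 then x (Fin.last _) else 0)
      (by
        conv_rhs => rw [wS_init]
        rw [wS_zero (m + 1)]
        · simp; field_simp
        · intro i
          have := i.2
          have h1 : i.val ≠ m + 1 := by omega
          have h2 : i.val ≠ m + 2 := by omega
          simp [h1, h2]) (by simp)
    rw [e1]
    refine ht _ _ ?_ (by simp)
    rw [wS_init (m + 2)]
    generalize wS (m + 2) z (fun i => x i.castSucc) = u
    generalize x (Fin.last _) = v
    conv_lhs => rw [wS_init, wS_init]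
    conv_rhs => rw [wS_init]
    rw [wS_zero m, wS_zero (m + 1)]
    · simp; field_simp; try ring
    · intro i
      have := i.2
      have h1 : i.val ≠ m + 1 := by omega
      simp [h1]
    · intro i
      have := i.2
      have h1 : i.val ≠ m := by omega
      have h2 : i.val ≠ m + 1 := by omega
      simp [h1, h2]

theorem idem_of_nonconst {R : Type*} [Field R] [Infinite R] (N : ℕ)
    (p : MvPolynomial (Fin N) R)
    (hd : ∀ x : Fin N → R, MvPolynomial.eval (fun _ => MvPolynomial.eval x p) p
      = MvPolynomial.eval x p)
    (hc : ¬ ∃ c : R, ∀ x : Fin N → R, MvPolynomial.eval x p = c) (t : R) :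
    MvPolynomial.eval (fun _ => t) p = t := by
  push Not at hc
  obtain ⟨x, hx⟩ := hc (MvPolynomial.eval 0 p)
  let q : Polynomial R := MvPolynomial.aeval (fun i => Polynomial.C (x i) * Polynomial.X) p
  let d : Polynomial R := MvPolynomial.aeval (fun _ => (Polynomial.X : Polynomial R)) p
  have hq : ∀ s, q.eval s = MvPolynomial.eval (fun i => x i * s) p := by
    intro s
    have := MvPolynomial.comp_aeval_apply (fun i => Polynomial.C (x i) * Polynomial.X)
      (Polynomial.aeval s : Polynomial R →ₐ[R] R) p
    simpa [q, MvPolynomial.aeval_eq_eval, Polynomial.coe_aeval_eq_eval] using this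
  have hde : ∀ s, d.eval s = MvPolynomial.eval (fun i => s) p := by
    intro s
    have := MvPolynomial.comp_aeval_apply (fun _ : Fin N => (Polynomial.X : Polynomial R))
      (Polynomial.aeval s : Polynomial R →ₐ[R] R) p
    simpa [d, MvPolynomial.aeval_eq_eval, Polynomial.coe_aeval_eq_eval] using this
  have hcomp : (d - Polynomial.X).comp q = 0 := by
    apply Polynomial.funext
    intro s
    simp [Polynomial.eval_comp, hde, hq, hd]
  rcases Polynomial.comp_eq_zero_iff.mp hcomp with h | ⟨_, h⟩
  · have := hde t
    rw [sub_eq_zero.mp h] at this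
    simpa using this.symm
  · exfalso
    apply hx
    have a1 := hq 1
    have a0 := hq 0
    rw [h] at a1 a0
    simp only [Polynomial.eval_C, mul_one, mul_zero] at a1 a0
    rw [← a1, a0]; rfl

/-- Proposition: let `F` be a B-associative `*`-ary polynomial function on an infinite
field `R` with `F_n = M_n^z` for some `n ≥ 2` and some `z` with `Δ_n^z ≠ 0`. Then either
`F_{n+1} = M_{n+1}^z` (in particular `Δ_{n+1}^z ≠ 0`) or `F_{n+1}` is constant; moreover,
if `Δ_{n+1}^z = 0` then `F_{n+1}` is constant. -/
theorem succ_of_weighted_mean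
    {R : Type*} [Field R] [Infinite R]
    (F : ∀ n : ℕ, (Fin n → R) → R)
    (hpoly : ∀ n : ℕ, 1 ≤ n →
      ∃ p : MvPolynomial (Fin n) R, ∀ x : Fin n → R, F n x = MvPolynomial.eval x p)
    (hB : BAssoc F)
    (n : ℕ) (hn : 2 ≤ n) (z : R) (hΔ : Delta n z ≠ 0)
    (hFn : F n = Mz n z) :
    ((Delta (n + 1) z ≠ 0 ∧ F (n + 1) = Mz (n + 1) z) ∨
      ∃ c : R, ∀ x : Fin (n + 1) → R, F (n + 1) x = c) ∧
    (Delta (n + 1) z = 0 → ∃ c : R, ∀ x : Fin (n + 1) → R, F (n + 1) x = c) := by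
  have main : (∃ c : R, ∀ x : Fin (n + 1) → R, F (n + 1) x = c) ∨
      (Delta (n + 1) z ≠ 0 ∧ F (n + 1) = Mz (n + 1) z) := by
    by_cases hc : ∃ c : R, ∀ x : Fin (n + 1) → R, F (n + 1) x = c
    · exact Or.inl hc
    right
    obtain ⟨m, rfl⟩ : ∃ m, n = m + 2 := ⟨n - 2, by omega⟩
    have hS : ∀ x, F (m + 2) x = (Delta (m + 2) z)⁻¹ * wS (m + 2) z x := by
      intro x; rw [hFn]; rfl
    obtain ⟨h, hh⟩ := factor_h m z (F (m + 3))
      (by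
        intro x y hxy hl
        refine hB.gen 0 (m + 2) 1 (m + 3) (by omega) (by omega) x y ?_ ?_
        · intro i hi
          have : i = Fin.last _ := by ext; simp; omega
          rw [this, hl]
        · rw [hS, hS]
          congr 1
          convert hxy using 3 <;> (congr 1; ext; simp))
      (by
        intro x y hxy hl
        refine hB.gen 1 (m + 2) 0 (m + 3) (by omega) (by omega) x y ?_ ?_
        · intro i hi
          have : i = 0 := by ext; rw [Fin.val_zero]; omega
          rw [this, hl]
        · rw [hS, hS]
          congr 1
          convert hxy using 3 <;> (congr 1; ext; simp; omega))
    obtain ⟨p, hp⟩ := hpoly (m + 3) (by omega)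
    have hid : ∀ t, F (m + 3) (fun _ => t) = t := by
      intro t
      rw [hp]
      refine idem_of_nonconst _ p (fun x => ?_) (by simpa only [hp] using hc) t
      simp only [← hp]
      have := hB 0 0 (m + 3) (by omega) Fin.elim0 x Fin.elim0
      symm
      have key : ∀ y : Fin (m + 3) → R, F (0 + (m + 3) + 0)
          (Fin.append (Fin.append Fin.elim0 y) Fin.elim0) = F (m + 3) y := by
        intro y
        have hc : ∀ (N : ℕ) (hN : N = m + 3) (w : Fin N → R),
            (∀ i, w i = y (Fin.cast hN i)) → F N w = F (m + 3) y := by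
          intro N hN w hw
          subst hN
          congr 1
          funext i
          simpa using hw i
        refine hc _ (by omega) _ fun i => ?_
        simp [Fin.append_elim0, Fin.elim0_append]
      exact (key x).symm.trans (this.trans (key _))
    have hD : ∀ t, h (Delta (m + 3) z * t) = t := by
      intro t
      rw [← wS_const, ← hh, hid]
    have hne : Delta (m + 3) z ≠ 0 := by
      intro h0
      have a := hD 0
      have b := hD 1
      rw [h0, zero_mul] at a b
      exact zero_ne_one (a.symm.trans b)
    refine ⟨hne, ?_⟩
    funext x
    have := hD ((Delta (m + 3) z)⁻¹ * wS (m + 3) z x)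
    rw [mul_inv_cancel_left₀ hne, ← hh] at this
    exact this
  refine ⟨main.symm, fun h0 => ?_⟩
  rcases main with h | h
  · exact h
  · exact absurd h0 h.1
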